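/- arXiv:2506.09877 — 4 statements merged into one kernel-verified Lean document; each statement's English description precedes it below -/
import Mathlib

section
/- Fix k ∈ ℕ. For each N, let X_N = (X_{N,1}, …, X_{N,N}) and Y_N = (Y_{N,1}, …, Y_{N,N}) be random elements of (ℝ^k)^N on a common probability space such that: (i) N^{-1/2}(Σ_{i=1}^N ‖X_{N,i} − Y_{N,i}‖₂²)^{1/2} → 0 in probability; (ii) for every m ∈ ℕ there exists a constant B_m > 0 with P((1/N)Σ_{i=1}^N ‖X_{N,i}‖₂^m ≥ B_m) → 0 and P((1/N)Σ_{i=1}^N ‖Y_{N,i}‖₂^m ≥ B_m) → 0 as N → ∞. Then for every function φ : ℝ^k → ℝ that is pseudo-Lipschitz of some finite order, |(1/N)Σ_{i=1}^N φ(X_{N,i}) − (1/N)Σ_{i=1}^N φ(Y_{N,i})| → 0 in probability as N → ∞. -/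
/-!
Pointwise, the pseudo-Lipschitz bound and the Cauchy–Schwarz inequality give
`(1/N ∑ φ(Xᵢ) - 1/N ∑ φ(Yᵢ))² ≤ L² (1/N ∑ Wᵢ²) (1/N ∑ ‖Xᵢ - Yᵢ‖²)` with
`Wᵢ = 1 + ‖Xᵢ‖^d + ‖Yᵢ‖^d`, and `Wᵢ² ≤ 3 (1 + ‖Xᵢ‖^(2d) + ‖Yᵢ‖^(2d))`
(`sq_average_sub_le`). Outside the two events on which the empirical moments of order `2d`
exceed `B`, the middle factor is at most `3 (1 + 2B)`, so the difference of averages can be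
at least `ε` only if the normalized `ℓ²` distance is at least a fixed `δ > 0`. A union bound over
three events of vanishing probability concludes; only subadditivity is used, so no measurability
of the events is needed.
-/

open MeasureTheory Filter

noncomputable section

/-- Euclidean norm of a vector given as a function. -/
def vecNorm {k : ℕ} (x : Fin k → ℝ) : ℝ :=
  Real.sqrt (∑ i, (x i) ^ 2)

/-- Convergence to zero in probability. -/
def TendstoInProb {Ω : Type*} [MeasurableSpace Ω] (μ : Measure Ω) (Z : ℕ → Ω → ℝ) : Prop :=
  ∀ ε : ℝ, 0 < ε → Tendsto (fun N => μ {ω | ε ≤ |Z N ω|}) atTop (nhds 0)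

/-- `f : ℝ^m → ℝ` is pseudo-Lipschitz of order `k`. -/
def PseudoLipschitz {m : ℕ} (k : ℕ) (f : (Fin m → ℝ) → ℝ) : Prop :=
  ∃ L : ℝ, ∀ x y : Fin m → ℝ,
    |f x - f y| ≤ L * (1 + (vecNorm x) ^ k + (vecNorm y) ^ k) * vecNorm (fun i => x i - y i)

/-- The deterministic estimate: Cauchy–Schwarz applied to the averaged pseudo-Lipschitz bound. -/
theorem sq_average_sub_le {k N d : ℕ} (hN : 0 < N) {φ : (Fin k → ℝ) → ℝ} {L : ℝ}
    (hL : ∀ x y : Fin k → ℝ, |φ x - φ y| ≤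
      L * (1 + (vecNorm x) ^ d + (vecNorm y) ^ d) * vecNorm (fun i => x i - y i))
    (x y : Fin N → Fin k → ℝ) :
    ((1 / (N : ℝ)) * ∑ i, φ (x i) - (1 / (N : ℝ)) * ∑ i, φ (y i)) ^ 2 ≤
      L ^ 2 * (3 * (1 + (1 / (N : ℝ)) * ∑ i, (vecNorm (x i)) ^ (2 * d)
        + (1 / (N : ℝ)) * ∑ i, (vecNorm (y i)) ^ (2 * d))) *
      ((N : ℝ) ^ (-(1/2 : ℝ)) *
        Real.sqrt (∑ i, (vecNorm (fun l => x i l - y i l)) ^ 2)) ^ 2 := by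
  have hN' : (0 : ℝ) < N := by exact_mod_cast hN
  set D : Fin N → ℝ := fun i => vecNorm (fun l => x i l - y i l) with hD
  set W : Fin N → ℝ := fun i => 1 + (vecNorm (x i)) ^ d + (vecNorm (y i)) ^ d with hW
  have hQ : ((N : ℝ) ^ (-(1/2 : ℝ)) * Real.sqrt (∑ i, D i ^ 2)) ^ 2
      = (1 / (N : ℝ)) * ∑ i, D i ^ 2 := by
    rw [mul_pow, Real.sq_sqrt (Finset.sum_nonneg fun i _ => sq_nonneg _),
      ← Real.rpow_natCast, ← Real.rpow_mul hN'.le]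
    norm_num [Real.rpow_neg_one]
  have hdiff : |∑ i, φ (x i) - ∑ i, φ (y i)| ≤ |L * ∑ i, W i * D i| := by
    rw [← Finset.sum_sub_distrib]
    refine (Finset.abs_sum_le_sum_abs _ _).trans (le_trans ?_ (le_abs_self _))
    rw [Finset.mul_sum]
    refine Finset.sum_le_sum fun i _ => ?_
    have := hL (x i) (y i)
    rwa [mul_assoc] at this
  have hsq := sq_le_sq.mpr hdiff
  have hCS := Finset.sum_mul_sq_le_sq_mul_sq Finset.univ W D
  have hW2 : ∑ i, W i ^ 2 ≤ 3 * (N + ∑ i, (vecNorm (x i)) ^ (2 * d)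
      + ∑ i, (vecNorm (y i)) ^ (2 * d)) := by
    have : 3 * (N + ∑ i, (vecNorm (x i)) ^ (2 * d) + ∑ i, (vecNorm (y i)) ^ (2 * d))
        = ∑ i, 3 * (1 + (vecNorm (x i)) ^ (2 * d) + (vecNorm (y i)) ^ (2 * d)) := by
      simp [← Finset.mul_sum, Finset.sum_add_distrib]
    rw [this]
    refine Finset.sum_le_sum fun i _ => ?_
    simp only [hW, mul_comm 2 d, pow_mul]
    nlinarith [sq_nonneg (vecNorm (x i) ^ d - 1), sq_nonneg (vecNorm (y i) ^ d - 1),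
      sq_nonneg (vecNorm (x i) ^ d - vecNorm (y i) ^ d)]
  rw [hQ]
  have hDn : 0 ≤ ∑ i, D i ^ 2 := Finset.sum_nonneg fun i _ => sq_nonneg _
  calc ((1 / (N : ℝ)) * ∑ i, φ (x i) - (1 / (N : ℝ)) * ∑ i, φ (y i)) ^ 2
      = (1 / (N : ℝ)) ^ 2 * (∑ i, φ (x i) - ∑ i, φ (y i)) ^ 2 := by ring
    _ ≤ (1 / (N : ℝ)) ^ 2 * (L ^ 2 * ((3 * (N + ∑ i, (vecNorm (x i)) ^ (2 * d)
          + ∑ i, (vecNorm (y i)) ^ (2 * d))) * ∑ i, D i ^ 2)) := by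
        refine mul_le_mul_of_nonneg_left (hsq.trans ?_) (sq_nonneg _)
        rw [mul_pow]
        exact mul_le_mul_of_nonneg_left
          (hCS.trans (mul_le_mul_of_nonneg_right hW2 hDn)) (sq_nonneg _)
    _ = _ := by field_simp

/-- if the empirical ℓ² distance between the rows of `X_N` and `Y_N`
(normalized by `N^{-1/2}`) tends to zero in probability, and all empirical moments of the
rows of `X_N` and `Y_N` are bounded with high probability, then for every pseudo-Lipschitz
test function `φ` the difference of empirical averages tends to zero in probability. -/
theorem statement6 (k : ℕ) {Ω : Type*} [MeasureSpace Ω]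
    [IsProbabilityMeasure (volume : Measure Ω)]
    (X Y : (N : ℕ) → Ω → Fin N → Fin k → ℝ)
    (h1 : TendstoInProb (volume : Measure Ω) (fun N ω =>
      (N : ℝ) ^ (-(1/2 : ℝ)) *
        Real.sqrt (∑ i, (vecNorm (fun l => X N ω i l - Y N ω i l)) ^ 2)))
    (h2 : ∀ m : ℕ, ∃ B : ℝ, 0 < B ∧
      Tendsto (fun N : ℕ => (volume : Measure Ω)
        {ω : Ω | B ≤ (1 / (N : ℝ)) * ∑ i, (vecNorm (X N ω i)) ^ m}) atTop (nhds 0) ∧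
      Tendsto (fun N : ℕ => (volume : Measure Ω)
        {ω : Ω | B ≤ (1 / (N : ℝ)) * ∑ i, (vecNorm (Y N ω i)) ^ m}) atTop (nhds 0)) :
    ∀ φ : (Fin k → ℝ) → ℝ, (∃ d : ℕ, PseudoLipschitz d φ) →
      TendstoInProb (volume : Measure Ω) (fun N ω =>
        (1 / (N : ℝ)) * ∑ i, φ (X N ω i) - (1 / (N : ℝ)) * ∑ i, φ (Y N ω i)) := by
  rintro φ ⟨d, L, hL⟩ ε hε
  obtain ⟨B, hB, hX, hY⟩ := h2 (2 * d)
  set K : ℝ := L ^ 2 * (3 * (1 + B + B)) + 1 with hK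
  have hKpos : 0 < K := by positivity
  -- `δ` is chosen so that `K δ² = ε²`
  set δ : ℝ := ε / Real.sqrt K with hδ
  have hδpos : 0 < δ := div_pos hε (Real.sqrt_pos.mpr hKpos)
  have hKδ : K * δ ^ 2 = ε ^ 2 := by
    rw [hδ, div_pow, Real.sq_sqrt hKpos.le]
    field_simp
  have hsum := ((h1 δ hδpos).add hX).add hY
  simp only [add_zero] at hsum
  refine tendsto_of_tendsto_of_tendsto_of_le_of_le' tendsto_const_nhds hsum
    (Eventually.of_forall fun N => zero_le) ?_
  filter_upwards [eventually_gt_atTop 0] with N hN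
  refine (measure_mono ?_).trans ((measure_union_le _ _).trans
    (add_le_add_left (measure_union_le _ _) _))
  intro ω hω
  by_contra hcon
  simp only [Set.mem_union, Set.mem_ofPred_eq, not_or, not_le] at hcon hω
  obtain ⟨⟨hQ, hx⟩, hy⟩ := hcon
  have key := sq_average_sub_le hN hL (X N ω) (Y N ω)
  have hQ2 := sq_lt_sq' (by linarith [abs_nonneg ((N : ℝ) ^ (-(1/2 : ℝ)) *
        Real.sqrt (∑ i, (vecNorm (fun l => X N ω i l - Y N ω i l)) ^ 2))]) hQ
  rw [sq_abs] at hQ2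
  have hε2 := pow_le_pow_left₀ hε.le hω 2
  rw [sq_abs] at hε2
  set Q := (N : ℝ) ^ (-(1/2 : ℝ)) *
        Real.sqrt (∑ i, (vecNorm (fun l => X N ω i l - Y N ω i l)) ^ 2)
  have hcoef : L ^ 2 * (3 * (1 + (1 / (N : ℝ)) * ∑ i, (vecNorm (X N ω i)) ^ (2 * d)
        + (1 / (N : ℝ)) * ∑ i, (vecNorm (Y N ω i)) ^ (2 * d))) ≤ K := by
    have : L ^ 2 * (3 * (1 + (1 / (N : ℝ)) * ∑ i, (vecNorm (X N ω i)) ^ (2 * d)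
        + (1 / (N : ℝ)) * ∑ i, (vecNorm (Y N ω i)) ^ (2 * d))) ≤ L ^ 2 * (3 * (1 + B + B)) :=
      mul_le_mul_of_nonneg_left (by linarith) (sq_nonneg _)
    linarith
  have h3 := mul_le_mul_of_nonneg_right hcoef (sq_nonneg Q)
  have h4 := mul_lt_mul_of_pos_left hQ2 hKpos
  linarith
end
end

section
/- Let c : [0,1] × ℝ → {−1, +1} be a measurable function such that the topological boundary D = ∂(c^{-1}({+1})) has Lebesgue measure zero in [0,1] × ℝ. Let (U, H) be a random pair in [0,1] × ℝ whose joint law is absolutely continuous with respect to Lebesgue measure on [0,1] × ℝ, and let (H_n) be a sequence of real random variables on the same probability space with H_n → H in probability. Then P(c(U, H_n) ≠ c(U, H)) → 0 as n → ∞. -/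
/-!
Off the frontier of `{c = 1}` the function `c` is locally constant, hence continuous, and `(U, H)`
almost surely avoids this frontier because its law is absolutely continuous. Every subsequence of
`Hn` has a further subsequence converging to `H` almost surely; along it `c (U, Hn)` converges to
`c (U, H)` almost surely, hence in measure. Since distinct values of `c` are at distance `2`, this
convergence in measure says that the probability of disagreement tends to `0`.
-/

open MeasureTheory Filter

noncomputable section

/-- let `c : [0,1] × ℝ → {−1,+1}` be a measurable update rule whose decision
boundary `∂(c⁻¹({+1}))` has Lebesgue measure zero in `[0,1] × ℝ`. If `(U, H)` has a law
absolutely continuous w.r.t. Lebesgue measure and `H_n → H` in probability, then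
`P(c(U, H_n) ≠ c(U, H)) → 0`. -/
theorem statement9 {Ω : Type*} [MeasureSpace Ω]
    [IsProbabilityMeasure (volume : Measure Ω)]
    (c : ℝ × ℝ → ℝ) (hcmeas : Measurable c) (hcval : ∀ p, c p = 1 ∨ c p = -1)
    (hD : volume (frontier {p : ℝ × ℝ | c p = 1} ∩ Set.Icc (0 : ℝ) 1 ×ˢ (Set.univ : Set ℝ)) = 0)
    (U H : Ω → ℝ) (hU : Measurable U) (hH : Measurable H)
    (hUrange : ∀ᵐ ω ∂(volume : Measure Ω), U ω ∈ Set.Icc (0 : ℝ) 1)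
    (habs : Measure.map (fun ω => (U ω, H ω)) (volume : Measure Ω)
      ≪ (volume : Measure (ℝ × ℝ)))
    (Hn : ℕ → Ω → ℝ) (hHn : ∀ n, Measurable (Hn n))
    (hconv : ∀ ε : ℝ, 0 < ε →
      Tendsto (fun n : ℕ => (volume : Measure Ω) {ω : Ω | ε ≤ |Hn n ω - H ω|})
        atTop (nhds 0)) :
    Tendsto (fun n : ℕ => (volume : Measure Ω) {ω : Ω | c (U ω, Hn n ω) ≠ c (U ω, H ω)})
      atTop (nhds 0) := by
  -- `c` is constant near every point off the frontier of `{c = 1}`.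
  have hcont : ∀ p, p ∉ frontier {p : ℝ × ℝ | c p = 1} → ContinuousAt c p := by
    intro p hp
    by_cases h1 : c p = 1
    · have hi : p ∈ interior {p : ℝ × ℝ | c p = 1} := by
        by_contra hni
        exact hp ⟨subset_closure h1, hni⟩
      have he : c =ᶠ[nhds p] fun _ => 1 := mem_interior_iff_mem_nhds.1 hi
      exact he.continuousAt
    · have hi : p ∉ closure {p : ℝ × ℝ | c p = 1} := by
        intro hcl
        exact hp ⟨hcl, fun hpi => h1 (interior_subset (s := {p | c p = 1}) hpi)⟩
      have hn : (closure {p : ℝ × ℝ | c p = 1})ᶜ ∈ nhds p :=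
        isClosed_closure.isOpen_compl.mem_nhds hi
      have he : c =ᶠ[nhds p] fun _ => -1 := by
        filter_upwards [hn] with q hq
        exact (hcval q).resolve_left fun h => hq (subset_closure h)
      exact he.continuousAt
  have hcontae : ∀ᵐ ω ∂(volume : Measure Ω), ContinuousAt c (U ω, H ω) := by
    have h0 : ∀ᵐ ω ∂(volume : Measure Ω), (U ω, H ω) ∉
        frontier {p : ℝ × ℝ | c p = 1} ∩ Set.Icc (0 : ℝ) 1 ×ˢ (Set.univ : Set ℝ) :=
      ae_of_ae_map (hU.prodMk hH).aemeasurable (measure_eq_zero_iff_ae_notMem.1 (habs hD))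
    filter_upwards [h0, hUrange] with ω hω hr
    exact hcont _ fun hf => hω ⟨hf, hr, Set.mem_univ _⟩
  have hmeas : TendstoInMeasure (volume : Measure Ω) Hn atTop H := by
    rw [tendstoInMeasure_iff_norm]
    exact hconv
  refine tendsto_of_subseq_tendsto fun ns hns => ?_
  obtain ⟨ms, -, hae⟩ :=
    TendstoInMeasure.exists_seq_tendsto_ae (hmeas.comp hns)
  refine ⟨ms, ?_⟩
  have hlim : TendstoInMeasure (volume : Measure Ω)
      (fun n ω => c (U ω, Hn (ns (ms n)) ω)) atTop (fun ω => c (U ω, H ω)) := by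
    refine tendstoInMeasure_of_tendsto_ae
      (fun n => (hcmeas.comp (hU.prodMk (hHn _))).aestronglyMeasurable) ?_
    filter_upwards [hae, hcontae] with ω hω hcω
    exact hcω.tendsto.comp (tendsto_const_nhds.prodMk_nhds hω)
  refine tendsto_of_tendsto_of_tendsto_of_le_of_le tendsto_const_nhds
    (tendstoInMeasure_iff_norm.1 hlim 1 one_pos) (fun _ => zero_le) fun n => ?_
  -- Distinct values of `c` are at distance `2`.
  refine measure_mono fun ω hω => ?_
  change c (U ω, Hn (ns (ms n)) ω) ≠ c (U ω, H ω) at hω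
  change 1 ≤ ‖c (U ω, Hn (ns (ms n)) ω) - c (U ω, H ω)‖
  rcases hcval (U ω, Hn (ns (ms n)) ω) with h | h <;> rcases hcval (U ω, H ω) with h' | h' <;>
    first | exact absurd (h.trans h'.symm) hω | (rw [h, h']; norm_num)
end
end

section
/- Let β ≥ 0 and a ∈ ℝ. Let G be a standard Gaussian random variable and let σ be uniform on {−1, +1}, independent of G. Then E[G · tanh(β(G + aσ))] = β(1 − E[tanh²(β(G + a))]). -/
/-!
Conditioning on `σ`, the left-hand side is the average of `E[G tanh(β(G + a))]` and
`E[G tanh(β(G - a))]`. These agree, because `G` and `-G` have the same law and `tanh` is odd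
(`integral_mul_tanh_neg_shift`). Gaussian integration by parts, `E[G f(G)] = E[f'(G)]`, applied to
`f x = tanh(β(x + a))` with `f' = β(1 - f²)`, evaluates the common value
(`integral_mul_tanh_shift`).
-/

open MeasureTheory ProbabilityTheory

noncomputable section

lemma hasDerivAt_tanh (x : ℝ) : HasDerivAt Real.tanh (1 - Real.tanh x ^ 2) x := by
  have hc := (Real.cosh_pos x).ne'
  have h := (Real.hasDerivAt_sinh x).div (Real.hasDerivAt_cosh x) hc
  rw [show Real.tanh = Real.sinh / Real.cosh from funext Real.tanh_eq_sinh_div_cosh]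
  refine h.congr_deriv ?_
  simp only [Pi.div_apply]
  field_simp

lemma continuous_tanh_real : Continuous Real.tanh :=
  continuous_iff_continuousAt.2 fun x => (hasDerivAt_tanh x).continuousAt

lemma hasDerivAt_tanh_shift (β a x : ℝ) :
    HasDerivAt (fun x => Real.tanh (β * (x + a)))
      (β * (1 - Real.tanh (β * (x + a)) ^ 2)) x := by
  have h := (hasDerivAt_tanh (β * (x + a))).comp x
    (((hasDerivAt_id x).add_const a).const_mul β)
  exact h.congr_deriv (by ring)

lemma continuous_tanh_shift (β a : ℝ) : Continuous fun x : ℝ => Real.tanh (β * (x + a)) :=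
  continuous_tanh_real.comp (by fun_prop)

lemma continuous_mul_tanh_shift (β a : ℝ) :
    Continuous fun x : ℝ => x * Real.tanh (β * (x + a)) :=
  continuous_id.mul (continuous_tanh_shift β a)

lemma hasDerivAt_gaussianPDFReal_std (x : ℝ) :
    HasDerivAt (gaussianPDFReal 0 1) (-(x * gaussianPDFReal 0 1 x)) x := by
  rw [gaussianPDFReal_def]
  have h : HasDerivAt (fun x : ℝ => -(x - 0) ^ 2 / (2 * ((1 : NNReal) : ℝ))) (-x) x := by
    refine ((((hasDerivAt_id x).sub_const 0).pow 2).neg.div_const _).congr_deriv ?_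
    simp
    ring
  refine (h.exp.const_mul _).congr_deriv ?_
  ring

lemma integrable_mul_tanh_shift (β a : ℝ) :
    Integrable (fun x => x * Real.tanh (β * (x + a))) (gaussianReal 0 1) := by
  have hid : Integrable (fun x : ℝ => x) (gaussianReal 0 1) :=
    memLp_one_iff_integrable.1 (memLp_id_gaussianReal' 1 (by simp))
  refine hid.mul_bdd (c := 1) (continuous_tanh_shift β a).aestronglyMeasurable ?_
  exact ae_of_all _ fun _ => (Real.abs_tanh_lt_one _).le

lemma integrable_tanh_shift (β a : ℝ) :
    Integrable (fun x => Real.tanh (β * (x + a))) (gaussianReal 0 1) :=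
  Integrable.of_bound (continuous_tanh_shift β a).aestronglyMeasurable 1
    (ae_of_all _ fun _ => (Real.abs_tanh_lt_one _).le)

lemma integrable_tanh_shift_sq (β a : ℝ) :
    Integrable (fun x => Real.tanh (β * (x + a)) ^ 2) (gaussianReal 0 1) := by
  refine Integrable.of_bound ((continuous_tanh_shift β a).pow 2).aestronglyMeasurable 1
    (ae_of_all _ fun _ => ?_)
  rw [Real.norm_of_nonneg (sq_nonneg _)]
  exact (Real.tanh_sq_lt_one _).le

lemma integrable_gaussianPDFReal_mul {f : ℝ → ℝ} (hf : Integrable f (gaussianReal 0 1)) :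
    Integrable fun x => gaussianPDFReal 0 1 x * f x := by
  rw [gaussianReal_of_var_ne_zero _ one_ne_zero,
    integrable_withDensity_iff_integrable_smul' (measurable_gaussianPDF _ _)
      (ae_of_all _ fun _ => gaussianPDF_lt_top)] at hf
  simpa using hf

/-- Gaussian integration by parts for `x ↦ tanh (β (x + a))`. -/
lemma integral_mul_tanh_shift (β a : ℝ) :
    ∫ x, x * Real.tanh (β * (x + a)) ∂(gaussianReal 0 1)
      = β * (1 - ∫ x, Real.tanh (β * (x + a)) ^ 2 ∂(gaussianReal 0 1)) := by
  have hd : Integrable (fun x => β * (1 - Real.tanh (β * (x + a)) ^ 2)) (gaussianReal 0 1) :=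
    ((integrable_const 1).sub (integrable_tanh_shift_sq β a)).const_mul β
  have key := integral_mul_deriv_eq_deriv_mul_of_integrable
    (u := fun x => Real.tanh (β * (x + a))) (v := gaussianPDFReal 0 1)
    (fun x _ => hasDerivAt_tanh_shift β a x) (fun x _ => hasDerivAt_gaussianPDFReal_std x)
    ((integrable_gaussianPDFReal_mul (integrable_mul_tanh_shift β a)).neg.congr
      (ae_of_all _ fun x => by simp; ring))
    ((integrable_gaussianPDFReal_mul hd).congr (ae_of_all _ fun x => by simp; ring))
    ((integrable_gaussianPDFReal_mul (integrable_tanh_shift β a)).congr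
      (ae_of_all _ fun x => by simp; ring))
  calc ∫ x, x * Real.tanh (β * (x + a)) ∂(gaussianReal 0 1)
      = -∫ x, Real.tanh (β * (x + a)) * -(x * gaussianPDFReal 0 1 x) := by
        rw [integral_gaussianReal_eq_integral_smul one_ne_zero, ← integral_neg]
        congr 1 with x
        simp only [smul_eq_mul]
        ring
    _ = ∫ x, β * (1 - Real.tanh (β * (x + a)) ^ 2) ∂(gaussianReal 0 1) := by
        rw [key, neg_neg, integral_gaussianReal_eq_integral_smul one_ne_zero]
        congr 1 with x
        simp only [smul_eq_mul]
        ring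
    _ = _ := by
        rw [integral_const_mul, integral_sub (integrable_const 1) (integrable_tanh_shift_sq β a)]
        simp

lemma integral_mul_tanh_neg_shift (β a : ℝ) :
    ∫ x, x * Real.tanh (β * (x + -a)) ∂(gaussianReal 0 1)
      = ∫ x, x * Real.tanh (β * (x + a)) ∂(gaussianReal 0 1) := by
  have hmap : (gaussianReal 0 1).map (fun x : ℝ => -x) = gaussianReal 0 1 := by
    simpa using gaussianReal_map_neg (μ := 0) (v := 1)
  conv_lhs => rw [← hmap]
  rw [integral_map (by fun_prop) (continuous_mul_tanh_shift β (-a)).aestronglyMeasurable]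
  congr 1 with x
  rw [show β * (-x + -a) = -(β * (x + a)) by ring, Real.tanh_neg]
  ring

/-- if `G` is standard Gaussian and `σ` is uniform on `{−1,+1}`,
independent of `G`, then for `β ≥ 0` and `a ∈ ℝ`,
`E[G · tanh(β(G + aσ))] = β(1 − E[tanh²(β(G + a))])`. -/
theorem statement10 {Ω : Type*} [MeasureSpace Ω]
    [IsProbabilityMeasure (volume : Measure Ω)]
    (β a : ℝ) (hβ : 0 ≤ β)
    (G σ : Ω → ℝ) (hG : Measurable G) (hσ : Measurable σ)
    (hGlaw : Measure.map G (volume : Measure Ω) = gaussianReal 0 1)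
    (hσval : ∀ ω, σ ω = 1 ∨ σ ω = -1)
    (hσunif : (volume : Measure Ω) {ω : Ω | σ ω = 1} = 1/2)
    (hindep : IndepFun G σ (volume : Measure Ω)) :
    (∫ ω, G ω * Real.tanh (β * (G ω + a * σ ω)) ∂(volume : Measure Ω))
      = β * (1 - ∫ x, (Real.tanh (β * (x + a))) ^ 2 ∂(gaussianReal 0 1)) := by
  have hint (c : ℝ) : Integrable (fun ω => G ω * Real.tanh (β * (G ω + c))) := by
    have h := integrable_mul_tanh_shift β c
    rw [← hGlaw] at h
    exact h.comp_measurable hG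
  have hlaw (c : ℝ) : ∫ ω, G ω * Real.tanh (β * (G ω + c))
      = ∫ x, x * Real.tanh (β * (x + c)) ∂(gaussianReal 0 1) := by
    rw [← hGlaw, integral_map hG.aemeasurable (continuous_mul_tanh_shift β c).aestronglyMeasurable]
  have hS : MeasurableSet {ω : Ω | σ ω = 1} := hσ (measurableSet_singleton 1)
  have hσeq : σ = fun ω => 2 * {ω : Ω | σ ω = 1}.indicator (fun _ => (1 : ℝ)) ω - 1 := by
    funext ω
    rcases hσval ω with h | h <;> norm_num [Set.indicator_apply, h]
  have hσint : Integrable σ :=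
    Integrable.of_bound hσ.aestronglyMeasurable 1
      (ae_of_all _ fun ω => by rcases hσval ω with h | h <;> simp [h])
  have hσmean : ∫ ω, σ ω = 0 := by
    rw [hσeq, integral_sub (((integrable_const 1).indicator hS).const_mul 2) (integrable_const 1),
      integral_const_mul, integral_indicator_const _ hS]
    simp [measureReal_def, hσunif]
  have hind (c : ℝ) : IndepFun (fun ω => G ω * Real.tanh (β * (G ω + c))) σ :=
    hindep.comp (φ := fun x => x * Real.tanh (β * (x + c)))
      (continuous_mul_tanh_shift β c).measurable measurable_id
  have hprod (c : ℝ) : ∫ ω, (G ω * Real.tanh (β * (G ω + c))) * σ ω = 0 := by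
    rw [(hind c).integral_fun_mul_eq_mul_integral (hint c).aestronglyMeasurable
      hσint.aestronglyMeasurable, hσmean, mul_zero]
  have hprodint (c : ℝ) : Integrable fun ω => (G ω * Real.tanh (β * (G ω + c))) * σ ω :=
    (hind c).integrable_mul (hint c) hσint
  -- Since `σ = ±1`, a function `h σ` equals `(h 1 + h (-1)) / 2 + σ (h 1 - h (-1)) / 2`, and the
  -- second part has mean zero by independence.
  have hsplit : (fun ω => G ω * Real.tanh (β * (G ω + a * σ ω))) = fun ω =>
      (1 / 2) * ((G ω * Real.tanh (β * (G ω + a)) + G ω * Real.tanh (β * (G ω + -a)))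
        + ((G ω * Real.tanh (β * (G ω + a))) * σ ω
          - (G ω * Real.tanh (β * (G ω + -a))) * σ ω)) := by
    funext ω
    rcases hσval ω with h | h <;> rw [h] <;> ring_nf
  have hdiff : Integrable fun ω => (G ω * Real.tanh (β * (G ω + a))) * σ ω
      - (G ω * Real.tanh (β * (G ω + -a))) * σ ω := (hprodint a).sub (hprodint (-a))
  rw [hsplit, integral_const_mul, integral_add ((hint a).fun_add (hint (-a))) hdiff,
    integral_add (hint a) (hint (-a)), integral_sub (hprodint a) (hprodint (-a)),
    hprod, hprod, hlaw, hlaw, integral_mul_tanh_neg_shift, integral_mul_tanh_shift]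
  ring
end
end

section
/- Let N ∈ ℕ, u ∈ ℝ^N, and set Σ_u = (‖u‖₂² I_N + u uᵀ)/N. Let D ∈ ℝ^{N×N} be a diagonal matrix with entries in {0, 1} (a coordinate projection), and let P ∈ ℝ^{N×N} be an orthogonal projection matrix satisfying P D = D P = P and P u = 0. Let X and Y be independent centered Gaussian vectors in ℝ^N, each with covariance matrix Σ_u. Then D(I − P)X + P Y is a centered Gaussian vector in ℝ^N with covariance matrix D Σ_u D. -/
/-!
For a test vector `a`, put `d = aᵀD` and `c = aᵀP`. Since `DP = P`, the functional `⟨a, ·⟩` of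
`D(I - P)X + PY` equals `⟨d - c, X⟩ + ⟨c, Y⟩`, a sum of two independent centered real Gaussians, so
it is Gaussian and the variances add. The quadratic form of `Σ_u` is
`q(v) = (‖u‖² ‖v‖² + ⟨v, u⟩²)/N`. Because `Pu = 0` it follows that `⟨c, u⟩ = 0`, and because `P` is a
symmetric idempotent with `DP = P`, also `⟨d, c⟩ = ⟨c, c⟩`; Pythagoras gives
`q(d - c) + q(c) = q(d)`, and `q(d) = aᵀ D Σ_u D a` as `D` is symmetric.
-/

open MeasureTheory ProbabilityTheory Matrix

noncomputable section

/-- The covariance matrix `Σ_u = (‖u‖₂² I_N + u uᵀ)/N`. -/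
def SigmaU (N : ℕ) (u : Fin N → ℝ) : Matrix (Fin N) (Fin N) ℝ :=
  (N : ℝ)⁻¹ • ((∑ k, (u k) ^ 2) • (1 : Matrix (Fin N) (Fin N) ℝ) + Matrix.vecMulVec u u)

/-- `Z` is a centered Gaussian random vector with covariance matrix `Σ`: every linear
functional `⟨a, Z⟩` has the centered Gaussian law with variance `aᵀ Σ a`. -/
def IsCenteredGaussianWithCov {Ω : Type*} [MeasureSpace Ω] {N : ℕ}
    (Z : Ω → Fin N → ℝ) (Sig : Matrix (Fin N) (Fin N) ℝ) : Prop :=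
  ∀ a : Fin N → ℝ,
    Measure.map (fun ω => ∑ i, a i * Z ω i) (volume : Measure Ω)
      = gaussianReal 0 (Real.toNNReal (∑ i, ∑ j, a i * Sig i j * a j))

lemma sum_sum_eq_dotProduct {N : ℕ} (a : Fin N → ℝ) (S : Matrix (Fin N) (Fin N) ℝ) :
    ∑ i, ∑ j, a i * S i j * a j = a ⬝ᵥ S *ᵥ a := by
  simp only [dotProduct, mulVec, Finset.mul_sum, mul_assoc]

lemma dotProduct_SigmaU {N : ℕ} (u v : Fin N → ℝ) :
    v ⬝ᵥ SigmaU N u *ᵥ v = (N : ℝ)⁻¹ * ((u ⬝ᵥ u) * (v ⬝ᵥ v) + (v ⬝ᵥ u) ^ 2) := by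
  have hu : ∑ k, (u k) ^ 2 = u ⬝ᵥ u := by simp [dotProduct, sq]
  rw [SigmaU, hu, smul_mulVec, add_mulVec, smul_mulVec, one_mulVec, vecMulVec_mulVec,
    dotProduct_smul, dotProduct_add, dotProduct_smul]
  simp [dotProduct_comm u v, sq]

lemma dotProduct_SigmaU_nonneg {N : ℕ} (u v : Fin N → ℝ) : 0 ≤ v ⬝ᵥ SigmaU N u *ᵥ v := by
  rw [dotProduct_SigmaU]
  have h (w : Fin N → ℝ) : 0 ≤ w ⬝ᵥ w := Finset.sum_nonneg fun i _ => mul_self_nonneg (w i)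
  have := h u
  have := h v
  positivity

/-- let `D` be a 0-1 diagonal (coordinate projection) matrix and `P` an
orthogonal projection with `P D = D P = P` and `P u = 0`. If `X` and `Y` are independent
centered Gaussian vectors, each with covariance `Σ_u = (‖u‖₂² I + u uᵀ)/N`, then
`D(I − P)X + P Y` is a centered Gaussian vector with covariance `D Σ_u D`. -/
theorem statement14 (N : ℕ) (u : Fin N → ℝ) {Ω : Type*} [MeasureSpace Ω]
    [IsProbabilityMeasure (volume : Measure Ω)]
    (D P : Matrix (Fin N) (Fin N) ℝ)
    (hDoffdiag : ∀ i j, i ≠ j → D i j = 0)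
    (hDdiag : ∀ i, D i i = 0 ∨ D i i = 1)
    (hPsymm : P.IsSymm) (hPidem : P * P = P)
    (hPD : P * D = P) (hDP : D * P = P)
    (hPu : P.mulVec u = 0)
    (X Y : Ω → Fin N → ℝ) (hX : Measurable X) (hY : Measurable Y)
    (hXlaw : IsCenteredGaussianWithCov X (SigmaU N u))
    (hYlaw : IsCenteredGaussianWithCov Y (SigmaU N u))
    (hindep : IndepFun X Y (volume : Measure Ω)) :
    IsCenteredGaussianWithCov
      (fun ω => D.mulVec ((1 - P).mulVec (X ω)) + P.mulVec (Y ω))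
      (D * SigmaU N u * D) := by
  have hDsymm : Dᵀ = D := by
    ext i j
    rcases eq_or_ne i j with rfl | h
    · rfl
    · rw [transpose_apply, hDoffdiag _ _ h, hDoffdiag _ _ h.symm]
  intro a
  set d := a ᵥ* D with hd
  set c := a ᵥ* P with hc
  have hcu : c ⬝ᵥ u = 0 := by rw [hc, ← dotProduct_mulVec, hPu, dotProduct_zero]
  have hPa : c = P *ᵥ a := by rw [hc, ← mulVec_transpose, hPsymm.eq]
  have hdc : d ⬝ᵥ c = c ⬝ᵥ c := by
    have h1 : d ⬝ᵥ c = a ⬝ᵥ P *ᵥ a := by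
      rw [hPa, hd, ← dotProduct_mulVec, mulVec_mulVec, hDP]
    have h2 : c ⬝ᵥ c = a ⬝ᵥ P *ᵥ a := by
      nth_rewrite 2 [hPa]
      rw [hc, ← dotProduct_mulVec, mulVec_mulVec, hPidem]
    rw [h1, h2]
  have hfun : (fun ω => ∑ i, a i * (D *ᵥ ((1 - P) *ᵥ X ω) + P *ᵥ Y ω) i)
      = (fun ω => ∑ i, (d - c) i * X ω i) + fun ω => ∑ i, c i * Y ω i := by
    funext ω
    change a ⬝ᵥ (D *ᵥ ((1 - P) *ᵥ X ω) + P *ᵥ Y ω) = (d - c) ⬝ᵥ X ω + c ⬝ᵥ Y ω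
    rw [dotProduct_add, mulVec_mulVec, mul_sub, mul_one, hDP, dotProduct_mulVec,
      dotProduct_mulVec, vecMul_sub]
  have hvar : a ⬝ᵥ (D * SigmaU N u * D) *ᵥ a
      = (d - c) ⬝ᵥ SigmaU N u *ᵥ (d - c) + c ⬝ᵥ SigmaU N u *ᵥ c := by
    have hq : a ⬝ᵥ (D * SigmaU N u * D) *ᵥ a = d ⬝ᵥ SigmaU N u *ᵥ d := by
      have hDa : D *ᵥ a = d := by rw [hd, ← mulVec_transpose, hDsymm]
      rw [← mulVec_mulVec, hDa, ← mulVec_mulVec, dotProduct_mulVec]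
    rw [hq, dotProduct_SigmaU, dotProduct_SigmaU, dotProduct_SigmaU]
    simp only [sub_dotProduct, dotProduct_sub, hcu, dotProduct_comm c d, hdc]
    ring
  have hmeas (w : Fin N → ℝ) : Measurable fun x : Fin N → ℝ => ∑ i, w i * x i := by fun_prop
  have hsum := gaussianReal_add_gaussianReal_of_indepFun
    (hindep.comp (hmeas (d - c)) (hmeas c)) (hXlaw (d - c)) (hYlaw c)
  rw [sum_sum_eq_dotProduct, sum_sum_eq_dotProduct, add_zero,
    ← Real.toNNReal_add (dotProduct_SigmaU_nonneg _ _) (dotProduct_SigmaU_nonneg _ _),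
    ← hvar] at hsum
  rw [hfun, sum_sum_eq_dotProduct]
  exact hsum
end
end
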